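/- Chi-squared concentration underlying the Johnson–Lindenstrauss Lemma: Let Z be a random variable with the chi-squared distribution with d degrees of freedom. Then for every ε ∈ (0, 1/2], ℙ(|Z/d − 1| ≥ ε) ≤ 2 exp(−d ε² / 8). -/

import Mathlib

open MeasureTheory ProbabilityTheory

/-!
Multiplying the density of `Gamma(a, r)` by `exp (t * x)`, `t < r`, gives `(r / (r - t)) ^ a` times
the density of `Gamma(a, r - t)`, which yields the moment generating function. Chernoff's bound at
the threshold `(1 + s) * (a / r)` is optimal for `t = r * s / (1 + s)`, and its value there is
`((1 + s) * exp (-s)) ^ a` for either sign of `s`. The exponents then come from the expansion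
`log (1 + s) - s = -s ^ 2 / 2 + s ^ 3 / 3 - ⋯`: for `s ≤ 0` the quadratic term bounds it from above,
while for `0 ≤ s ≤ 1` the cubic term costs a factor of two.
-/

section

open Real Set

variable {a r s t : ℝ}

lemma one_add_mul_exp_neg_le (hs₀ : 0 ≤ s) (hs₁ : s ≤ 1) :
    (1 + s) * exp (-s) ≤ exp (-(s ^ 2 / 4)) := by
  have quadratic_le : 1 + s ≤ 1 + (s - s ^ 2 / 4) + (s - s ^ 2 / 4) ^ 2 / 2 := by
    have : 1 / 2 ≤ (1 - s / 4) ^ 2 := by nlinarith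
    nlinarith [mul_le_mul_of_nonneg_left this (sq_nonneg s)]
  have le_exp : 1 + s ≤ exp (s - s ^ 2 / 4) :=
    quadratic_le.trans (quadratic_le_exp_of_nonneg (by nlinarith))
  calc (1 + s) * exp (-s) ≤ exp (s - s ^ 2 / 4) * exp (-s) := by gcongr
    _ = exp (-(s ^ 2 / 4)) := by rw [← exp_add]; ring_nf

lemma one_sub_mul_exp_le (hs : 0 ≤ s) : (1 - s) * exp s ≤ exp (-(s ^ 2 / 2)) := by
  rcases le_or_gt 1 s with hs₁ | hs₁
  · exact (mul_nonpos_of_nonpos_of_nonneg (by linarith) (exp_pos s).le).trans (exp_pos _).le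
  have one_sub_pos : 0 < 1 - s := sub_pos.2 hs₁
  have le_neg_log : s + s ^ 2 / 2 ≤ -log (1 - s) :=
    calc s + s ^ 2 / 2 ≤ 2 * s / (2 - s) := by
          rw [le_div_iff₀ (by linarith)]
          nlinarith [pow_nonneg hs 3]
      _ = 2 * (s / (1 - s)) / (s / (1 - s) + 2) := by
          have : 2 - s ≠ 0 := by linarith
          have : s + (1 - s) * 2 ≠ 0 := by linarith
          field_simp
          ring
      _ ≤ log (1 + s / (1 - s)) := le_log_one_add_of_nonneg (by positivity)
      _ = -log (1 - s) := by
          rw [← log_inv]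
          congr 1
          field_simp
          ring
  calc (1 - s) * exp s = exp (log (1 - s) + s) := by rw [exp_add, exp_log one_sub_pos]
    _ ≤ exp (-(s ^ 2 / 2)) := by gcongr; linarith

lemma exp_mul_mul_gammaPDFReal (hr : 0 ≤ r) (ht : t < r) (x : ℝ) :
    exp (t * x) * gammaPDFReal a r x = (r / (r - t)) ^ a * gammaPDFReal a (r - t) x := by
  have hrt : 0 < r - t := sub_pos.2 ht
  have exp_tilt : exp (-((r - t) * x)) = exp (t * x) * exp (-(r * x)) := by
    rw [← exp_add]; ring_nf
  unfold gammaPDFReal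
  split_ifs
  · rw [div_rpow hr hrt.le, exp_tilt]
    field_simp
  · simp only [mul_zero]

lemma lintegral_exp_mul_gammaMeasure (ha : 0 < a) (hr : 0 ≤ r) (ht : t < r) :
    ∫⁻ x, ENNReal.ofReal (exp (t * x)) ∂gammaMeasure a r = ENNReal.ofReal ((r / (r - t)) ^ a) := by
  have hrt : 0 < r - t := sub_pos.2 ht
  have measurable_gammaPDF (r : ℝ) : Measurable (gammaPDF a r) :=
    (measurable_gammaPDFReal a r).ennreal_ofReal
  rw [gammaMeasure, lintegral_withDensity_eq_lintegral_mul _ (measurable_gammaPDF r) (by fun_prop)]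
  calc ∫⁻ x, gammaPDF a r x * ENNReal.ofReal (exp (t * x))
      = ∫⁻ x, ENNReal.ofReal ((r / (r - t)) ^ a) * gammaPDF a (r - t) x := by
        congr with x
        rw [gammaPDF, gammaPDF, ← ENNReal.ofReal_mul' (by positivity),
          ← ENNReal.ofReal_mul (by positivity), mul_comm, exp_mul_mul_gammaPDFReal hr ht]
    _ = ENNReal.ofReal ((r / (r - t)) ^ a) := by
        rw [lintegral_const_mul _ (measurable_gammaPDF _), lintegral_gammaPDF_eq_one ha hrt,
          mul_one]

lemma integrable_exp_mul_gammaMeasure (ha : 0 < a) (hr : 0 ≤ r) (ht : t < r) :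
    Integrable (fun x ↦ exp (t * x)) (gammaMeasure a r) := by
  rw [← lintegral_ofReal_ne_top_iff_integrable (by fun_prop) (ae_of_all _ fun x ↦ (exp_pos _).le),
    lintegral_exp_mul_gammaMeasure ha hr ht]
  exact ENNReal.ofReal_ne_top

lemma mgf_id_gammaMeasure (ha : 0 < a) (hr : 0 ≤ r) (ht : t < r) :
    mgf id (gammaMeasure a r) t = (r / (r - t)) ^ a := by
  simp only [mgf, id]
  rw [integral_eq_lintegral_of_nonneg_ae (ae_of_all _ fun x ↦ (exp_pos _).le) (by fun_prop),
    lintegral_exp_mul_gammaMeasure ha hr ht,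
    ENNReal.toReal_ofReal (rpow_nonneg (div_nonneg hr (sub_pos.2 ht).le) a)]

lemma mul_div_one_add_lt_self (hr : 0 < r) (hs : -1 < s) : r * s / (1 + s) < r := by
  rw [div_lt_iff₀ (by linarith)]
  linarith

lemma exp_neg_mul_mgf_id_gammaMeasure (ha : 0 < a) (hr : 0 < r) (hs : -1 < s) :
    exp (-(r * s / (1 + s)) * ((1 + s) * (a / r))) * mgf id (gammaMeasure a r) (r * s / (1 + s)) =
      ((1 + s) * exp (-s)) ^ a := by
  have hs' : 0 < 1 + s := by linarith
  have exponent_eq : -(r * s / (1 + s)) * ((1 + s) * (a / r)) = -s * a := by field_simp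
  have base_eq : r / (r - r * s / (1 + s)) = 1 + s := by
    have : r - r * s / (1 + s) = r / (1 + s) := by field_simp; ring
    rw [this]
    field_simp
  rw [mgf_id_gammaMeasure ha hr.le (mul_div_one_add_lt_self hr hs), exponent_eq, base_eq,
    mul_rpow hs'.le (exp_pos _).le, ← exp_mul, mul_comm]

lemma measureReal_gammaMeasure_Ici_le (ha : 0 < a) (hr : 0 < r) (hs₀ : 0 ≤ s) (hs₁ : s ≤ 1) :
    (gammaMeasure a r).real (Ici ((1 + s) * (a / r))) ≤ exp (-(a * s ^ 2) / 4) := by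
  have := isProbabilityMeasure_gammaMeasure ha hr
  have hs : -1 < s := by linarith
  calc (gammaMeasure a r).real (Ici ((1 + s) * (a / r))) ≤ ((1 + s) * exp (-s)) ^ a := by
        rw [← exp_neg_mul_mgf_id_gammaMeasure ha hr hs]
        exact measure_ge_le_exp_mul_mgf _ (by positivity)
          (integrable_exp_mul_gammaMeasure ha hr.le (mul_div_one_add_lt_self hr hs))
    _ ≤ exp (-(s ^ 2 / 4)) ^ a := by gcongr; exact one_add_mul_exp_neg_le hs₀ hs₁
    _ = exp (-(a * s ^ 2) / 4) := by rw [← exp_mul]; ring_nf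

lemma gammaMeasure_Iic_of_nonpos {x : ℝ} (hx : x ≤ 0) : gammaMeasure a r (Iic x) = 0 := by
  rw [gammaMeasure, withDensity_apply _ measurableSet_Iic, setLIntegral_congr Iio_ae_eq_Iic.symm,
    lintegral_gammaPDF_of_nonpos hx]

lemma measureReal_gammaMeasure_Iic_le (ha : 0 < a) (hr : 0 < r) (hs : 0 ≤ s) :
    (gammaMeasure a r).real (Iic ((1 - s) * (a / r))) ≤ exp (-(a * s ^ 2) / 2) := by
  have := isProbabilityMeasure_gammaMeasure ha hr
  rcases le_or_gt 1 s with hs₁ | hs₁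
  · have threshold_nonpos : (1 - s) * (a / r) ≤ 0 :=
      mul_nonpos_of_nonpos_of_nonneg (by linarith) (by positivity)
    rw [measureReal_def, gammaMeasure_Iic_of_nonpos threshold_nonpos, ENNReal.toReal_zero]
    positivity
  have hs' : -1 < -s := by linarith
  have tilt_nonpos : r * -s / (1 + -s) ≤ 0 :=
    div_nonpos_of_nonpos_of_nonneg (by nlinarith) (by linarith)
  calc (gammaMeasure a r).real (Iic ((1 - s) * (a / r))) ≤ ((1 - s) * exp s) ^ a := by
        have chernoff := measure_le_le_exp_mul_mgf (X := id) ((1 + -s) * (a / r)) tilt_nonpos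
          (integrable_exp_mul_gammaMeasure ha hr.le (mul_div_one_add_lt_self hr hs'))
        rwa [exp_neg_mul_mgf_id_gammaMeasure ha hr hs', neg_neg, ← sub_eq_add_neg] at chernoff
    _ ≤ exp (-(s ^ 2 / 2)) ^ a :=
        rpow_le_rpow (mul_pos (sub_pos.2 hs₁) (exp_pos s)).le (one_sub_mul_exp_le hs) ha.le
    _ = exp (-(a * s ^ 2) / 2) := by rw [← exp_mul]; ring_nf

lemma setOf_le_abs_div_sub_one {m : ℝ} (hm : 0 < m) (ε : ℝ) :
    {x : ℝ | ε ≤ |x / m - 1|} = Ici ((1 + ε) * m) ∪ Iic ((1 - ε) * m) := by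
  ext x
  rw [mem_ofPred_eq, mem_union, mem_Ici, mem_Iic, le_abs, ← le_div_iff₀ hm, ← div_le_iff₀ hm,
    neg_sub, le_sub_iff_add_le', le_sub_comm]

theorem measureReal_gammaMeasure_le_abs_div_sub_one_le (ha : 0 < a) (hr : 0 < r) {ε : ℝ}
    (hε : ε ∈ Icc 0 1) :
    (gammaMeasure a r).real {x | ε ≤ |x / (a / r) - 1|} ≤ 2 * exp (-(a * ε ^ 2) / 4) := by
  rw [setOf_le_abs_div_sub_one (by positivity)]
  calc (gammaMeasure a r).real (Ici ((1 + ε) * (a / r)) ∪ Iic ((1 - ε) * (a / r)))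
      ≤ exp (-(a * ε ^ 2) / 4) + exp (-(a * ε ^ 2) / 2) :=
        (measureReal_union_le _ _).trans (add_le_add
          (measureReal_gammaMeasure_Ici_le ha hr hε.1 hε.2)
          (measureReal_gammaMeasure_Iic_le ha hr hε.1))
    _ ≤ exp (-(a * ε ^ 2) / 4) + exp (-(a * ε ^ 2) / 4) := by
        gcongr _ + exp ?_
        linarith [mul_nonneg ha.le (sq_nonneg ε)]
    _ = 2 * exp (-(a * ε ^ 2) / 4) := (two_mul _).symm

theorem chi_squared_concentration_general {Ω : Type*} {mΩ : MeasurableSpace Ω} {P : Measure Ω}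
    {X : Ω → ℝ} (ha : 0 < a) (hr : 0 < r) (hX : P.map X = gammaMeasure a r) {ε : ℝ}
    (hε : ε ∈ Icc 0 1) :
    P {ω | ε ≤ |X ω / (a / r) - 1|} ≤ ENNReal.ofReal (2 * exp (-(a * ε ^ 2) / 4)) := by
  have := isProbabilityMeasure_gammaMeasure ha hr
  have hasLaw : HasLaw X (gammaMeasure a r) P :=
    ⟨.of_map_ne_zero (hX ▸ IsProbabilityMeasure.ne_zero _), hX⟩
  have measurableSet_deviation : MeasurableSet {x | ε ≤ |x / (a / r) - 1|} :=
    measurableSet_le (by fun_prop) (by fun_prop)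
  rw [hasLaw.measure_eq measurableSet_deviation, ← ofReal_measureReal]
  exact ENNReal.ofReal_le_ofReal (measureReal_gammaMeasure_le_abs_div_sub_one_le ha hr hε)

end

/-- **Chi-squared concentration underlying the Johnson–Lindenstrauss Lemma.**  If `Z` has
the chi-squared distribution with `d` degrees of freedom (i.e. the `Gamma(d/2, 1/2)`
distribution), then for every `ε ∈ (0, 1/2]`,
`ℙ(|Z/d − 1| ≥ ε) ≤ 2 exp(−d ε² / 8)`. -/
theorem chi_squared_concentration {d : ℕ}
    {Ω : Type*} [MeasureSpace Ω] [IsProbabilityMeasure (ℙ : Measure Ω)]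
    (Z : Ω → ℝ) (hZ : Measure.map Z ℙ = gammaMeasure (d / 2 : ℝ) (1 / 2 : ℝ))
    {ε : ℝ} (hε : ε ∈ Set.Ioc (0 : ℝ) (1 / 2)) :
    ℙ {ω | ε ≤ |Z ω / d - 1|} ≤ ENNReal.ofReal (2 * Real.exp (-(d * ε ^ 2) / 8)) := by
  rcases d.eq_zero_or_pos with rfl | hd
  · exact prob_le_one.trans (by simp)
  · have := chi_squared_concentration_general (by positivity) one_half_pos hZ
      ⟨hε.1.le, hε.2.trans one_half_lt_one.le⟩
    rwa [show (d : ℝ) / 2 / (1 / 2) = d by ring,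
      show -(d / 2 * ε ^ 2) / 4 = -(d * ε ^ 2) / 8 by ring] at this
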